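/- Let A, B be positive definite n×n complex matrices with B ≤ A in the Loewner order. Then for all a, b ∈ (0,1] and all t ∈ [0,1], in the Loewner order, T_{(1−t)a + tb}(A|B) ≥ (1−t)·T_a(A|B) + t·T_b(A|B). -/

import Mathlib

open Matrix ComplexOrder

/-- Real power of a (Hermitian) matrix via the continuous functional calculus. -/
noncomputable def mrpow {n : ℕ} (A : Matrix (Fin n) (Fin n) ℂ) (t : ℝ) :
    Matrix (Fin n) (Fin n) ℂ :=
  cfc (fun x : ℝ => x ^ t) A

/-- The weighted geometric mean `A ♯_t B = A^{1/2} (A^{-1/2} B A^{-1/2})^t A^{1/2}`. -/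
noncomputable def geomMean {n : ℕ} (A B : Matrix (Fin n) (Fin n) ℂ) (t : ℝ) :
    Matrix (Fin n) (Fin n) ℂ :=
  mrpow A (1 / 2) * mrpow (mrpow A (-(1 / 2)) * B * mrpow A (-(1 / 2))) t * mrpow A (1 / 2)

/-- The Tsallis relative operator entropy `T_s(A|B) = (A ♯_s B - A)/s`. -/
noncomputable def tsallis {n : ℕ} (A B : Matrix (Fin n) (Fin n) ℂ) (s : ℝ) :
    Matrix (Fin n) (Fin n) ℂ :=
  s⁻¹ • (geomMean A B s - A)

/-! For `0 ≤ x ≤ 1` and `0 < s`,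

  `(x ^ s - 1) / s = -∫ y in x..1, y ^ (s - 1)`,

and for each fixed `y > 0` the integrand is an exponential function of `s`, hence convex. So the
left-hand side is concave in `s`. The functional calculus carries this over to every operator
`0 ≤ X ≤ 1`, in particular to `X = A^{-1/2} B A^{-1/2}` when `0 ≤ B ≤ A`. Conjugating by the
self-adjoint `A^{1/2}`, which is linear and monotone, turns `(X ^ s - 1) / s` into `T_s(A|B)`. -/

open Set MeasureTheory

section Scalar

variable {x : ℝ}

lemma convexOn_intervalIntegral_rpow_sub_one {a b : ℝ} (ha : 0 ≤ a) (hab : a ≤ b) :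
    ConvexOn ℝ (Ioi 0) fun s : ℝ => ∫ y in a..b, y ^ (s - 1) := by
  have integrand_convexOn {y : ℝ} (hy : 0 < y) :
      ConvexOn ℝ (Ioi 0) fun s : ℝ => y ^ (s - 1) := by
    simpa only [sub_eq_add_neg] using!
      ((convexOn_rpow_left hy).translate_left (-1)).subset (subset_univ _) (convex_Ioi 0)
  have integrable {s : ℝ} (hs : 0 < s) :
      IntervalIntegrable (fun y : ℝ => y ^ (s - 1)) volume a b :=
    intervalIntegral.intervalIntegrable_rpow' (by linarith)
  simp only [intervalIntegral.integral_of_le hab]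
  exact integral_convexOn_of_integrand_ae (convex_Ioi 0)
    (ae_restrict_of_forall_mem measurableSet_Ioc fun y hy => integrand_convexOn (ha.trans_lt hy.1))
    fun s hs => (integrable hs).1

/-- The deformed logarithm `ln_s x = (x ^ s - 1) / s`, the scalar case `T_s(1|x)` of the Tsallis
relative operator entropy. It is only meaningful for `s ≠ 0`: here `ln_0 = 0`, not `log`. -/
noncomputable def tsallisLog (s x : ℝ) : ℝ :=
  s⁻¹ * (x ^ s - 1)

lemma continuous_tsallisLog {s : ℝ} (hs : 0 ≤ s) : Continuous (tsallisLog s) :=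
  continuous_const.mul ((Real.continuous_rpow_const hs).sub continuous_const)

lemma tsallisLog_eq_neg_integral {s : ℝ} (hs : 0 < s) :
    tsallisLog s x = -∫ y in x..1, y ^ (s - 1) := by
  rw [integral_rpow (.inl (by linarith)), sub_add_cancel, Real.one_rpow, tsallisLog]
  ring

lemma concaveOn_tsallisLog (hx₀ : 0 ≤ x) (hx₁ : x ≤ 1) :
    ConcaveOn ℝ (Ioi 0) fun s => tsallisLog s x :=
  (convexOn_intervalIntegral_rpow_sub_one hx₀ hx₁).neg.congr fun _ hs =>
    (tsallisLog_eq_neg_integral hs).symm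

end Scalar

section Operator

variable {R : Type*} [Ring R] [StarRing R] [Algebra ℝ R]

lemma cfc_tsallisLog [TopologicalSpace R] [ContinuousFunctionalCalculus ℝ R IsSelfAdjoint]
    {X : R} (hX : IsSelfAdjoint X) {s : ℝ} (hs : 0 ≤ s) :
    cfc (tsallisLog s) X = s⁻¹ • (cfc (fun x : ℝ => x ^ s) X - 1) := by
  have hpow : ContinuousOn (fun x : ℝ => x ^ s) (spectrum ℝ X) :=
    (Real.continuous_rpow_const hs).continuousOn
  unfold tsallisLog
  rw [cfc_const_mul s⁻¹ (fun x => x ^ s - 1) X (hpow.sub continuousOn_const),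
    cfc_sub (fun x => x ^ s) (fun _ => 1) X hpow continuousOn_const, cfc_const_one ℝ X]

variable [PartialOrder R] [StarOrderedRing R]
  {E : Type*} [AddCommMonoid E] [Module ℝ E] {S : Set E}

lemma concaveOn_conjugate {f : E → R} (hf : ConcaveOn ℝ S f) {c : R} (hc : IsSelfAdjoint c) :
    ConcaveOn ℝ S fun s => c * f s * c := by
  refine ⟨hf.1, fun p hp q hq u v hu hv huv => ?_⟩
  simpa only [mul_add, add_mul, mul_smul_comm, smul_mul_assoc] using
    hc.conjugate_le_conjugate (hf.2 hp hq hu hv huv)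

variable [TopologicalSpace R] [ContinuousFunctionalCalculus ℝ R IsSelfAdjoint] {X : R}

lemma concaveOn_cfc {f : E → ℝ → ℝ} (hS : Convex ℝ S)
    (hf : ∀ x ∈ spectrum ℝ X, ConcaveOn ℝ S fun s => f s x)
    (hcont : ∀ s ∈ S, ContinuousOn (f s) (spectrum ℝ X)) :
    ConcaveOn ℝ S fun s => cfc (f s) X := by
  refine ⟨hS, fun p hp q hq u v hu hv huv => ?_⟩
  have hcp : ContinuousOn (fun x => u • f p x) (spectrum ℝ X) := (hcont p hp).const_smul u
  have hcq : ContinuousOn (fun x => v • f q x) (spectrum ℝ X) := (hcont q hq).const_smul v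
  calc
    u • cfc (f p) X + v • cfc (f q) X = cfc (fun x => u • f p x + v • f q x) X := by
      rw [← cfc_smul u (f p) X (hcont p hp), ← cfc_smul v (f q) X (hcont q hq),
        ← cfc_add X (fun x => u • f p x) (fun x => v • f q x) hcp hcq]
    _ ≤ cfc (f (u • p + v • q)) X :=
      cfc_mono (fun x hx => (hf x hx).2 hp hq hu hv huv)
        (hcp.add hcq) (hcont _ (hS hp hq hu hv huv))

lemma concaveOn_cfc_tsallisLog [NonnegSpectrumClass ℝ R] (hX₀ : 0 ≤ X) (hX₁ : X ≤ 1) :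
    ConcaveOn ℝ (Ioi 0) fun s => cfc (tsallisLog s) X :=
  concaveOn_cfc (convex_Ioi 0)
    (fun x hx => concaveOn_tsallisLog (spectrum_nonneg_of_nonneg hX₀ hx)
      ((CFC.le_one_iff X (.of_nonneg hX₀)).1 hX₁ x hx))
    fun _ hs => (continuous_tsallisLog (le_of_lt hs)).continuousOn

end Operator

section Matrix

open scoped MatrixOrder Matrix.Norms.L2Operator

variable {n : ℕ} {A B : Matrix (Fin n) (Fin n) ℂ}

lemma isSelfAdjoint_mrpow (A : Matrix (Fin n) (Fin n) ℂ) (s : ℝ) : IsSelfAdjoint (mrpow A s) :=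
  cfc_predicate (fun x : ℝ => x ^ s) A

lemma mrpow_eq_rpow (hA : A.PosSemidef) (s : ℝ) : mrpow A s = A ^ s :=
  (CFC.rpow_eq_cfc_real hA.nonneg).symm

lemma mrpow_half_mul_self (hA : A.PosSemidef) : mrpow A (1 / 2) * mrpow A (1 / 2) = A := by
  rw [mrpow_eq_rpow hA, ← CFC.sqrt_eq_rpow, CFC.sqrt_mul_sqrt_self A hA.nonneg]

lemma mrpow_neg_half_conjugate_self (hA : A.PosDef) :
    mrpow A (-(1 / 2)) * A * mrpow A (-(1 / 2)) = 1 := by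
  rw [mrpow_eq_rpow hA.posSemidef, CFC.conjugate_rpow_neg_one_half A hA.isStrictlyPositive]

lemma tsallis_eq_conjugate_cfc_tsallisLog (hA : A.PosSemidef) (hB : B.IsHermitian) {s : ℝ}
    (hs : 0 ≤ s) :
    tsallis A B s = mrpow A (1 / 2) *
      cfc (tsallisLog s) (mrpow A (-(1 / 2)) * B * mrpow A (-(1 / 2))) * mrpow A (1 / 2) := by
  have hX : IsSelfAdjoint (mrpow A (-(1 / 2)) * B * mrpow A (-(1 / 2))) :=
    IsSelfAdjoint.conjugate_self hB (isSelfAdjoint_mrpow A _)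
  rw [cfc_tsallisLog hX hs, ← mrpow, mul_smul_comm, smul_mul_assoc, mul_sub, sub_mul, mul_one,
    mrpow_half_mul_self hA, tsallis, geomMean]

theorem stmt16_general (hA : A.PosDef) (hB : B.PosSemidef) (hBA : B ≤ A) :
    ConcaveOn ℝ (Ioi 0) (tsallis A B) := by
  have hQ := isSelfAdjoint_mrpow A (-(1 / 2))
  have hX₀ : 0 ≤ mrpow A (-(1 / 2)) * B * mrpow A (-(1 / 2)) := hQ.conjugate_nonneg hB.nonneg
  have hX₁ : mrpow A (-(1 / 2)) * B * mrpow A (-(1 / 2)) ≤ 1 :=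
    (hQ.conjugate_le_conjugate hBA).trans_eq (mrpow_neg_half_conjugate_self hA)
  exact (concaveOn_conjugate (concaveOn_cfc_tsallisLog hX₀ hX₁) (isSelfAdjoint_mrpow A _)).congr
    fun _ hs => (tsallis_eq_conjugate_cfc_tsallisLog hA.posSemidef hB.1 (le_of_lt hs)).symm

end Matrix

/-- For positive definite `B ≤ A`, `a, b ∈ (0,1]` and `t ∈ [0,1]`,
in the Loewner order: `T_{(1-t)a+tb}(A|B) ≥ (1-t)T_a(A|B) + tT_b(A|B)`. -/
theorem stmt16 (n : ℕ) (A B : Matrix (Fin n) (Fin n) ℂ) (hA : A.PosDef) (hB : B.PosDef)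
    (hBA : (A - B).PosSemidef)
    (a b : ℝ) (ha : a ∈ Set.Ioc (0 : ℝ) 1) (hb : b ∈ Set.Ioc (0 : ℝ) 1)
    (t : ℝ) (ht : t ∈ Set.Icc (0 : ℝ) 1) :
    (tsallis A B ((1 - t) * a + t * b) -
      ((1 - t) • tsallis A B a + t • tsallis A B b)).PosSemidef :=
  (stmt16_general hA hB.posSemidef hBA).2 ha.1 hb.1 (sub_nonneg.2 ht.2) ht.1
    (sub_add_cancel 1 t)
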